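/- arXiv:2508.19211 — 3 statements merged into one kernel-verified Lean document; each statement's English description precedes it below -/
import Mathlib

section
/- Let ℓ be an odd prime different from char(K) and suppose ζ_ℓ ∈ K. Set Γ_{ℓ,E} := Γ_ℓ ∩ K(W_ℓ)^×. Then K(Γ_ℓ) ∩ K(W_ℓ) = K(Γ_{ℓ,E}) and [K(Γ):K] = |Γ_ℓ : K^×| · [K(W_ℓ):K] / |Γ_{ℓ,E} : K^×|. -/
noncomputable section

open IntermediateField

/-- `K^×` viewed as a subgroup of the units of the algebraic closure of `K`. -/
def baseUnits (K : Type*) [Field K] : Subgroup (AlgebraicClosure K)ˣ :=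
  (Units.map (algebraMap K (AlgebraicClosure K)).toMonoidHom).range

/-- The subgroup of `(AlgebraicClosure K)ˣ` of elements whose `m`-th power lies in `K^×`. -/
def radGroup (K : Type*) [Field K] (m : ℕ) : Subgroup (AlgebraicClosure K)ˣ where
  carrier := {x | ∃ y : K, algebraMap K (AlgebraicClosure K) y = (x : AlgebraicClosure K) ^ m}
  one_mem' := ⟨1, by simp⟩
  mul_mem' := by
    rintro a b ⟨y, hy⟩ ⟨z, hz⟩
    exact ⟨y * z, by rw [map_mul, hy, hz, Units.val_mul, mul_pow]⟩
  inv_mem' := by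
    rintro a ⟨y, hy⟩
    refine ⟨y⁻¹, ?_⟩
    rw [map_inv₀, hy, Units.val_inv_eq_inv_val, inv_pow]

lemma radGroup_le (K : Type*) [Field K] {m k : ℕ} :
    radGroup K m ≤ radGroup K (m * k) := by
  rintro x ⟨y, hy⟩
  exact ⟨y ^ k, by rw [map_pow, hy, ← pow_mul]⟩

/-- The group `√[ℓ^∞]{K^×}` of radicals of `ℓ`-power order over `K`. -/
def radInf (K : Type*) [Field K] (ℓ : ℕ) : Subgroup (AlgebraicClosure K)ˣ where
  carrier := {x | ∃ n : ℕ, x ∈ radGroup K (ℓ ^ n)}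
  one_mem' := ⟨0, one_mem _⟩
  mul_mem' := by
    rintro a b ⟨n, ha⟩ ⟨m, hb⟩
    refine ⟨n + m, mul_mem ?_ ?_⟩
    · have h : radGroup K (ℓ ^ n) ≤ radGroup K (ℓ ^ (n + m)) := by
        rw [pow_add]; exact radGroup_le K
      exact h ha
    · have h : radGroup K (ℓ ^ m) ≤ radGroup K (ℓ ^ (n + m)) := by
        rw [add_comm, pow_add]; exact radGroup_le K
      exact h hb
  inv_mem' := by
    rintro a ⟨n, ha⟩
    exact ⟨n, inv_mem ha⟩

/-- The units of the algebraic closure lying in an intermediate field `F`, as a subgroup. -/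
def unitsIn {K : Type*} [Field K] (F : IntermediateField K (AlgebraicClosure K)) :
    Subgroup (AlgebraicClosure K)ˣ where
  carrier := {x | (x : AlgebraicClosure K) ∈ F}
  one_mem' := by
    show ((1 : (AlgebraicClosure K)ˣ) : AlgebraicClosure K) ∈ F
    simpa using one_mem F
  mul_mem' := by
    intro a b ha hb
    show ((a * b : (AlgebraicClosure K)ˣ) : AlgebraicClosure K) ∈ F
    rw [Units.val_mul]
    exact mul_mem ha hb
  inv_mem' := by
    intro x hx
    show ((x⁻¹ : (AlgebraicClosure K)ˣ) : AlgebraicClosure K) ∈ F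
    rw [Units.val_inv_eq_inv_val]
    exact inv_mem hx

/-- `K(ζ_{2𝒫})`: the extension of `K` generated by all roots of unity whose order is `4` or
an odd prime, and not divisible by the characteristic of `K`. -/
def cyclo2P (K : Type*) [Field K] : IntermediateField K (AlgebraicClosure K) :=
  IntermediateField.adjoin K
    {x : AlgebraicClosure K |
      ∃ n : ℕ, (n = 4 ∨ (n.Prime ∧ Odd n)) ∧ ¬ (ringChar K ∣ n) ∧ IsPrimitiveRoot x n}

/-- The set of roots of unity of order exactly `n` in the algebraic closure of `K`. -/
def primRoots (K : Type*) [Field K] (n : ℕ) : Set (AlgebraicClosure K) :=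
  {x | IsPrimitiveRoot x n}

/-- The set of roots of unity of order `ℓ^n` for `n ≤ t` (all of them if `t = ∞`). -/
def pPowRoots (K : Type*) [Field K] (ℓ : ℕ) (t : ℕ∞) : Set (AlgebraicClosure K) :=
  {x | ∃ n : ℕ, (n : ℕ∞) ≤ t ∧ IsPrimitiveRoot x (ℓ ^ n)}

/-- The set of units that are roots of unity of order `ℓ^n` for `n ≤ t`. -/
def pPowRootsUnits (K : Type*) [Field K] (ℓ : ℕ) (t : ℕ∞) : Set (AlgebraicClosure K)ˣ :=
  {x | ∃ n : ℕ, (n : ℕ∞) ≤ t ∧ IsPrimitiveRoot (x : AlgebraicClosure K) (ℓ ^ n)}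

/-!
Everything rests on one degree formula: `[F(Γ) : F] = |Γ : F^× ∩ Γ|` for every intermediate field
`F` over which `Γ` has `ℓ`-power index. It follows by induction from the case where one element `a`
with `a ^ ℓ ∈ F` is adjoined, provided that `F(a)^× ∩ Γ` is no larger than `F^× · ⟨a⟩`.

To see this, let `b ∈ F(a)` and let `n` be minimal with `b ^ ℓ ^ n ∈ F`. If `n ≥ 1`, then
`X ^ ℓ ^ n - b ^ ℓ ^ n` is irreducible over `F` by the Vahlen–Capelli criterion, which needs `ℓ` odd
and `ζ_ℓ ∈ F`. Hence `ℓ ^ n ≤ [F(a) : F] = ℓ`, and in any case `b ^ ℓ ∈ F`. A generator `σ` of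
`Gal(F(a) / F)` multiplies both `a` and `b` by `ℓ`-th roots of unity, hence fixes `b / a ^ i` for
some `i`, so `b / a ^ i ∈ F`.

Now let `E` be any intermediate field, such as `K(W_ℓ)`. The fields `K(Γ ∩ E^×) ⊆ K(Γ) ∩ E` contain
the same elements of `Γ`, so `K(Γ)` has the same degree over both and they are equal. The degree of
`K(Γ)E` over `E` is given by the formula with `F = E`.
-/

section Group

variable {G : Type*} [CommGroup G] {H N : Subgroup G} {p : ℕ}

theorem exists_notMem_pow_mem_of_prime_dvd_relIndex (hp : p.Prime) (hHN : H.relIndex N ≠ 0)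
    (hdvd : p ∣ H.relIndex N) : ∃ a ∈ N, a ∉ H ∧ a ^ p ∈ H := by
  have : Fact p.Prime := ⟨hp⟩
  have : Finite (N ⧸ H.subgroupOf N) := Nat.finite_of_card_ne_zero hHN
  obtain ⟨q, hq⟩ := exists_prime_orderOf_dvd_card' p hdvd
  obtain ⟨a, rfl⟩ := QuotientGroup.mk_surjective q
  obtain ⟨hpow, hne⟩ := orderOf_eq_prime_iff.1 hq
  rw [← QuotientGroup.mk_pow, QuotientGroup.eq_one_iff, Subgroup.mem_subgroupOf] at hpow
  rw [Ne, QuotientGroup.eq_one_iff, Subgroup.mem_subgroupOf] at hne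
  exact ⟨a, a.2, hne, hpow⟩

theorem relIndex_eq_prime_of_le_sup_zpowers (hp : p.Prime) {a : G} (haN : a ∈ N) (haH : a ∉ H)
    (hpow : a ^ p ∈ H) (hN : N ≤ H ⊔ Subgroup.zpowers a) : H.relIndex N = p := by
  have : Fact p.Prime := ⟨hp⟩
  let q : N ⧸ H.subgroupOf N := QuotientGroup.mk ⟨a, haN⟩
  have horder : orderOf q = p := by
    refine orderOf_eq_prime ?_ ?_
    · rwa [← QuotientGroup.mk_pow, QuotientGroup.eq_one_iff, Subgroup.mem_subgroupOf]
    · rwa [Ne, QuotientGroup.eq_one_iff, Subgroup.mem_subgroupOf]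
  have hgen (r : N ⧸ H.subgroupOf N) : r ∈ Subgroup.zpowers q := by
    obtain ⟨⟨b, hb⟩, rfl⟩ := QuotientGroup.mk_surjective r
    obtain ⟨h, hh, _, ⟨k, rfl⟩, rfl⟩ := Subgroup.mem_sup.1 (hN hb)
    refine ⟨k, ?_⟩
    dsimp only [q]
    rw [← QuotientGroup.mk_zpow, QuotientGroup.eq, Subgroup.mem_subgroupOf]
    simpa [mul_comm h] using hh
  exact (orderOf_eq_card_of_forall_mem_zpowers hgen).symm.trans horder

end Group

section Kummer

theorem exists_eq_pow_mul_of_pow_eq_pow {R : Type*} [CommRing R] [IsDomain R] {n : ℕ}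
    (hn : 0 < n) {ζ a b : R} (hζ : IsPrimitiveRoot ζ n) (h : b ^ n = a ^ n) :
    ∃ i : ℕ, b = ζ ^ i * a := by
  have hb : b ∈ Polynomial.nthRoots n (a ^ n) := (Polynomial.mem_nthRoots hn).2 h
  rw [hζ.nthRoots_eq rfl] at hb
  obtain ⟨i, -, hi⟩ := Multiset.mem_map.1 hb
  exact ⟨i, hi.symm⟩

variable {F M : Type*} [Field F] [Field M] [Algebra F M]

theorem mem_range_algebraMap_of_pow_eq_algebraMap_pow {n : ℕ} (hn : 0 < n) {ζ : F}
    (hζ : IsPrimitiveRoot ζ n) {b : M} {c : F} (h : b ^ n = algebraMap F M c ^ n) :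
    b ∈ Set.range (algebraMap F M) := by
  obtain ⟨i, rfl⟩ :=
    exists_eq_pow_mul_of_pow_eq_pow hn (hζ.map_of_injective (algebraMap F M).injective) h
  exact ⟨ζ ^ i * c, by rw [map_mul, map_pow]⟩

theorem exists_aut_generator_apply_eq_mul [FiniteDimensional F M] {ζ : F}
    (hζ : IsPrimitiveRoot ζ (Module.finrank F M)) {a : M} (htop : F⟮a⟯ = ⊤)
    (ha : a ^ Module.finrank F M ∈ Set.range (algebraMap F M)) :
    ∃ σ : Gal(M/F), σ a = algebraMap F M ζ * a ∧
      ∀ x, σ x = x → x ∈ Set.range (algebraMap F M) := by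
  obtain ⟨y, hy⟩ := ha
  have : NeZero (Module.finrank F M) := ⟨Module.finrank_pos.ne'⟩
  have hroots : (primitiveRoots (Module.finrank F M) F).Nonempty :=
    ⟨ζ, (mem_primitiveRoots Module.finrank_pos).2 hζ⟩
  have hirr := irreducible_X_pow_sub_C_of_root_adjoin_eq_top hy.symm htop
  have := isSplittingField_X_pow_sub_C_of_root_adjoin_eq_top hroots hy.symm htop
  have := isGalois_of_isSplittingField_X_pow_sub_C hroots hirr M
  let e := autEquivZmod hirr M hζ
  refine ⟨e.symm (.ofAdd 1), ?_, fun x hx => ?_⟩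
  · simpa [Algebra.smul_def] using autEquivZmod_symm_apply_natCast hirr M hy.symm hζ 1
  · rw [IsGalois.mem_range_algebraMap_iff_fixed]
    intro τ
    obtain ⟨k, hk⟩ := ZMod.natCast_zmod_surjective (e τ).toAdd
    have hτ : τ = e.symm (.ofAdd 1) ^ k := by
      rw [← map_pow, ← ofAdd_nsmul, nsmul_one, hk, ofAdd_toAdd, e.symm_apply_apply]
    rw [hτ]
    exact pow_mem (show _ ∈ MulAction.stabilizer Gal(M/F) x from hx) k

theorem exists_eq_algebraMap_mul_pow_of_adjoin_eq_top [FiniteDimensional F M] {ζ : F}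
    (hζ : IsPrimitiveRoot ζ (Module.finrank F M)) {a b : M} (ha0 : a ≠ 0) (htop : F⟮a⟯ = ⊤)
    (ha : a ^ Module.finrank F M ∈ Set.range (algebraMap F M))
    (hb : b ^ Module.finrank F M ∈ Set.range (algebraMap F M)) :
    ∃ (f : F) (i : ℕ), b = algebraMap F M f * a ^ i := by
  obtain ⟨σ, hσa, hfix⟩ := exists_aut_generator_apply_eq_mul hζ htop ha
  obtain ⟨y, hy⟩ := hb
  have hζM := hζ.map_of_injective (algebraMap F M).injective
  obtain ⟨i, hσb⟩ : ∃ i : ℕ, σ b = algebraMap F M ζ ^ i * b :=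
    exists_eq_pow_mul_of_pow_eq_pow Module.finrank_pos hζM
      (by rw [← map_pow, ← hy, AlgEquiv.commutes])
  obtain ⟨f, hf⟩ := hfix (b / a ^ i) (by
    rw [map_div₀, map_pow, hσa, hσb, mul_pow,
      mul_div_mul_left _ _ (pow_ne_zero _ (hζM.ne_zero Module.finrank_pos.ne'))])
  exact ⟨f, i, by rw [hf, div_mul_cancel₀ _ (pow_ne_zero _ ha0)]⟩

theorem finrank_adjoin_simple_eq_prime_pow {p : ℕ} (hp : p.Prime) (hodd : Odd p) {ζ : F}
    (hζ : IsPrimitiveRoot ζ p) {b : M} {k : ℕ}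
    (hb : b ^ p ^ k ∉ Set.range (algebraMap F M))
    (hb' : b ^ p ^ (k + 1) ∈ Set.range (algebraMap F M)) :
    Module.finrank F F⟮b⟯ = p ^ (k + 1) := by
  obtain ⟨y, hy⟩ := hb'
  have hirr : Irreducible (Polynomial.X ^ p ^ (k + 1) - Polynomial.C y) := by
    have hp2 : p ≠ 2 := hodd.ne_two_of_dvd_nat dvd_rfl
    refine X_pow_sub_C_irreducible_of_prime_pow hp hp2 _ fun c hc => hb ?_
    refine mem_range_algebraMap_of_pow_eq_algebraMap_pow hp.pos hζ (c := c) ?_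
    rw [← pow_mul, ← pow_succ, ← hy, ← map_pow, hc]
  have hmonic := Polynomial.monic_X_pow_sub_C y (pow_ne_zero (k + 1) hp.ne_zero)
  have hroot : Polynomial.aeval b (Polynomial.X ^ p ^ (k + 1) - Polynomial.C y) = 0 := by
    simp [hy]
  rw [adjoin.finrank ⟨_, hmonic, hroot⟩, ← minpoly.eq_of_irreducible_of_monic hirr hroot hmonic,
    Polynomial.natDegree_X_pow_sub_C]

theorem pow_mem_range_algebraMap_of_pow_prime_pow_mem {p : ℕ} (hp : p.Prime) (hodd : Odd p)
    {ζ : F} (hζ : IsPrimitiveRoot ζ p) (hM : Module.finrank F M = p) {b : M} {n : ℕ}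
    (hb : b ^ p ^ n ∈ Set.range (algebraMap F M)) :
    b ^ p ∈ Set.range (algebraMap F M) := by
  have : FiniteDimensional F M := Module.finite_of_finrank_pos (hM ▸ hp.pos)
  induction n with
  | zero =>
    rw [pow_zero, pow_one] at hb
    obtain ⟨y, rfl⟩ := hb
    exact ⟨y ^ p, map_pow _ _ _⟩
  | succ n ih =>
    by_contra hbp
    have hdeg := finrank_adjoin_simple_eq_prime_pow hp hodd hζ (fun h => hbp (ih h)) hb
    have hle : Module.finrank F F⟮b⟯ ≤ Module.finrank F M :=
      Submodule.finrank_le F⟮b⟯.toSubmodule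
    rw [hdeg, hM] at hle
    have hn : n + 1 ≤ 1 := (Nat.pow_le_pow_iff_right hp.one_lt).1 (hle.trans_eq (pow_one p).symm)
    obtain rfl : n = 0 := by omega
    exact hbp (by rwa [zero_add, pow_one] at hb)

theorem finrank_adjoin_simple_eq_prime {p : ℕ} (hp : p.Prime) (hodd : Odd p) {ζ : F}
    (hζ : IsPrimitiveRoot ζ p) {a : M} (ha : a ∉ Set.range (algebraMap F M))
    (hap : a ^ p ∈ Set.range (algebraMap F M)) : Module.finrank F F⟮a⟯ = p := by
  simpa using finrank_adjoin_simple_eq_prime_pow (b := a) (k := 0) hp hodd hζ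
    (by simpa using ha) (by simpa using hap)

theorem exists_eq_algebraMap_mul_pow_of_mem_adjoin_simple {p : ℕ} (hp : p.Prime) (hodd : Odd p)
    {ζ : F} (hζ : IsPrimitiveRoot ζ p) {a b : M} (ha : a ∉ Set.range (algebraMap F M))
    (hap : a ^ p ∈ Set.range (algebraMap F M)) (hb : b ∈ F⟮a⟯) {n : ℕ}
    (hbp : b ^ p ^ n ∈ Set.range (algebraMap F M)) :
    ∃ (f : F) (i : ℕ), b = algebraMap F M f * a ^ i := by
  have hdeg := finrank_adjoin_simple_eq_prime hp hodd hζ ha hap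
  have : FiniteDimensional F F⟮a⟯ := Module.finite_of_finrank_pos (hdeg ▸ hp.pos)
  have hrange {x : F⟮a⟯} (hx : (x : M) ∈ Set.range (algebraMap F M)) :
      x ∈ Set.range (algebraMap F F⟮a⟯) :=
    hx.imp fun _ hy => Subtype.ext hy
  have hbp' := pow_mem_range_algebraMap_of_pow_prime_pow_mem (b := ⟨b, hb⟩) (n := n) hp hodd hζ hdeg
    (hrange hbp)
  have ha0 : AdjoinSimple.gen F a ≠ 0 := by
    intro h
    exact ha ⟨0, by rw [map_zero, ← AdjoinSimple.coe_gen F a, h, ZeroMemClass.coe_zero]⟩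
  obtain ⟨f, i, hf⟩ := exists_eq_algebraMap_mul_pow_of_adjoin_eq_top (hdeg.symm ▸ hζ) ha0
    (lift_injective _ (by rw [lift_adjoin_simple, lift_top, AdjoinSimple.coe_gen]))
    (hdeg.symm ▸ hrange hap) (hdeg.symm ▸ hbp')
  exact ⟨f, i, congrArg Subtype.val hf⟩

end Kummer

section IntermediateField

variable {K L : Type*} [Field K] [Field L] [Algebra K L]

/-- The multiplicative group `F^×` of an intermediate field `F` of `L / K`, as a subgroup of `Lˣ`,
so that it can be intersected with, and has an index in, other subgroups of `Lˣ`. -/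
def fieldUnits (F : IntermediateField K L) : Subgroup Lˣ :=
  F.toSubfield.toSubmonoid.units

@[simp]
theorem mem_fieldUnits {F : IntermediateField K L} {x : Lˣ} : x ∈ fieldUnits F ↔ (x : L) ∈ F := by
  refine Submonoid.mem_units_iff _ _ |>.trans ⟨And.left, fun hx => ⟨hx, ?_⟩⟩
  rw [Units.val_inv_eq_inv_val]
  exact inv_mem (S := IntermediateField K L) hx

theorem mem_fieldUnits_iff_mem_range_algebraMap {F : IntermediateField K L} {x : Lˣ} :
    x ∈ fieldUnits F ↔ (x : L) ∈ Set.range (algebraMap F L) :=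
  mem_fieldUnits.trans (Set.ext_iff.1 Subtype.range_coe (x : L)).symm

theorem fieldUnits_mono {F E : IntermediateField K L} (h : F ≤ E) : fieldUnits F ≤ fieldUnits E :=
  fun _ hx => mem_fieldUnits.2 (h (mem_fieldUnits.1 hx))

theorem fieldUnits_inf (F E : IntermediateField K L) :
    fieldUnits (F ⊓ E) = fieldUnits F ⊓ fieldUnits E := by
  ext x
  simp [mem_inf]

theorem adjoin_image_val_le_iff {Γ : Subgroup Lˣ} {F : IntermediateField K L} :
    adjoin K (Units.val '' (Γ : Set Lˣ)) ≤ F ↔ Γ ≤ fieldUnits F := by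
  rw [adjoin_le_iff, Set.image_subset_iff]
  exact forall₂_congr fun _ _ => mem_fieldUnits.symm

variable {p : ℕ} {ζ : K} {F : IntermediateField K L} {a : Lˣ}

theorem relfinrank_sup_adjoin_simple_eq_prime (hp : p.Prime) (hodd : Odd p)
    (hζ : IsPrimitiveRoot ζ p) (ha : a ∉ fieldUnits F) (hap : a ^ p ∈ fieldUnits F) :
    relfinrank F (F ⊔ K⟮(a : L)⟯) = p := by
  have hζF := hζ.map_of_injective (algebraMap K F).injective
  have hle : F ≤ restrictScalars K F⟮(a : L)⟯ := by
    rw [restrictScalars_adjoin_eq_sup]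
    exact le_sup_left
  rw [mem_fieldUnits_iff_mem_range_algebraMap] at ha hap
  rw [← restrictScalars_adjoin_eq_sup, relfinrank_eq_finrank_of_le hle]
  exact finrank_adjoin_simple_eq_prime hp hodd hζF ha hap

theorem mem_sup_zpowers_of_mem_sup_adjoin_simple (hp : p.Prime) (hodd : Odd p)
    (hζ : IsPrimitiveRoot ζ p) (ha : a ∉ fieldUnits F) (hap : a ^ p ∈ fieldUnits F) {b : Lˣ}
    (hb : b ∈ fieldUnits (F ⊔ K⟮(a : L)⟯)) {n : ℕ} (hbp : b ^ p ^ n ∈ fieldUnits F) :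
    b ∈ fieldUnits F ⊔ Subgroup.zpowers a := by
  have hζF := hζ.map_of_injective (algebraMap K F).injective
  rw [← restrictScalars_adjoin_eq_sup, mem_fieldUnits, mem_restrictScalars] at hb
  rw [mem_fieldUnits_iff_mem_range_algebraMap] at ha hap hbp
  obtain ⟨f, i, hf⟩ :=
    exists_eq_algebraMap_mul_pow_of_mem_adjoin_simple (n := n) hp hodd hζF ha hap hb hbp
  have hba : b * (a ^ i)⁻¹ ∈ fieldUnits F := by
    rw [mem_fieldUnits, Units.val_mul, hf, ← Units.val_pow_eq_pow_val, Units.mul_inv_cancel_right]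
    exact f.2
  exact Subgroup.mem_sup.2 ⟨_, hba, a ^ i, Subgroup.npow_mem_zpowers a i, inv_mul_cancel_right _ _⟩

variable {Γ : Subgroup Lˣ}

theorem relfinrank_sup_adjoin_of_relIndex_eq_prime_pow (hp : p.Prime) (hodd : Odd p)
    (hζ : IsPrimitiveRoot ζ p) {m : ℕ} (hΓ : (fieldUnits F).relIndex Γ = p ^ m) :
    relfinrank F (F ⊔ adjoin K (Units.val '' (Γ : Set Lˣ))) = p ^ m := by
  induction m generalizing F with
  | zero =>
    rw [pow_zero, Subgroup.relIndex_eq_one] at hΓ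
    rw [pow_zero, relfinrank_eq_one_iff]
    exact sup_le le_rfl (adjoin_image_val_le_iff.2 hΓ)
  | succ m ih =>
    obtain ⟨a, haΓ, ha, hap⟩ := exists_notMem_pow_mem_of_prime_dvd_relIndex hp
      (hΓ ▸ pow_ne_zero _ hp.ne_zero) (hΓ ▸ dvd_pow_self p m.succ_ne_zero)
    set F' := F ⊔ K⟮(a : L)⟯ with hF'
    have hFF' : F ≤ F' := le_sup_left
    have haF' : a ∈ fieldUnits F' :=
      mem_fieldUnits.2 ((le_sup_right : K⟮(a : L)⟯ ≤ F') (mem_adjoin_simple_self K _))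
    have hstep : (fieldUnits F).relIndex (fieldUnits F' ⊓ Γ) = p :=
      relIndex_eq_prime_of_le_sup_zpowers hp ⟨haF', haΓ⟩ ha hap fun b ⟨hbF', hbΓ⟩ =>
        mem_sup_zpowers_of_mem_sup_adjoin_simple hp hodd hζ ha hap hbF'
          (hΓ ▸ Subgroup.pow_relIndex_mem _ hbΓ)
    have hΓ' : (fieldUnits F').relIndex Γ = p ^ m := by
      have hmul := Subgroup.relIndex_inf_mul_relIndex (fieldUnits F) (fieldUnits F') Γ
      rw [hstep, inf_eq_left.2 (fieldUnits_mono hFF'), hΓ, pow_succ'] at hmul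
      exact Nat.eq_of_mul_eq_mul_left hp.pos hmul
    have hsup : F' ⊔ adjoin K (Units.val '' (Γ : Set Lˣ)) =
        F ⊔ adjoin K (Units.val '' (Γ : Set Lˣ)) := by
      rw [hF', sup_assoc, sup_eq_right.2 (adjoin.mono K _ _ _)]
      exact Set.singleton_subset_iff.2 ⟨a, haΓ, rfl⟩
    rw [← hsup, ← relfinrank_mul_relfinrank hFF' le_sup_left, ih hΓ',
      relfinrank_sup_adjoin_simple_eq_prime hp hodd hζ ha hap, pow_succ']

theorem exists_relIndex_fieldUnits_eq_prime_pow (hp : p.Prime)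
    (hΓ : ∃ m, (fieldUnits (⊥ : IntermediateField K L)).relIndex Γ = p ^ m)
    (E : IntermediateField K L) : ∃ m, (fieldUnits E).relIndex Γ = p ^ m := by
  obtain ⟨m, hm⟩ := hΓ
  obtain ⟨k, -, hk⟩ := (Nat.dvd_prime_pow hp).1
    (hm ▸ Subgroup.relIndex_dvd_of_le_left Γ (fieldUnits_mono (bot_le : ⊥ ≤ E)))
  exact ⟨k, hk⟩

theorem relfinrank_sup_adjoin_eq_relIndex (hp : p.Prime) (hodd : Odd p) (hζ : IsPrimitiveRoot ζ p)
    (hΓ : ∃ m, (fieldUnits (⊥ : IntermediateField K L)).relIndex Γ = p ^ m)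
    (E : IntermediateField K L) :
    relfinrank E (E ⊔ adjoin K (Units.val '' (Γ : Set Lˣ))) = (fieldUnits E).relIndex Γ := by
  obtain ⟨m, hm⟩ := exists_relIndex_fieldUnits_eq_prime_pow hp hΓ E
  rw [hm, relfinrank_sup_adjoin_of_relIndex_eq_prime_pow hp hodd hζ hm]

theorem adjoin_inf_eq_adjoin_inf_fieldUnits (hp : p.Prime) (hodd : Odd p)
    (hζ : IsPrimitiveRoot ζ p)
    (hΓ : ∃ m, (fieldUnits (⊥ : IntermediateField K L)).relIndex Γ = p ^ m)
    (E : IntermediateField K L) :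
    adjoin K (Units.val '' (Γ : Set Lˣ)) ⊓ E =
      adjoin K (Units.val '' ((Γ ⊓ fieldUnits E : Subgroup Lˣ) : Set Lˣ)) := by
  set KΓ := adjoin K (Units.val '' (Γ : Set Lˣ))
  set A := adjoin K (Units.val '' ((Γ ⊓ fieldUnits E : Subgroup Lˣ) : Set Lˣ)) with hA
  have hΓK : Γ ≤ fieldUnits KΓ := adjoin_image_val_le_iff.1 le_rfl
  have hAM : A ≤ KΓ ⊓ E := by
    rw [hA, adjoin_image_val_le_iff, fieldUnits_inf]
    exact inf_le_inf_right _ hΓK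
  refine le_antisymm ?_ hAM
  have hinf : fieldUnits A ⊓ Γ = fieldUnits (KΓ ⊓ E) ⊓ Γ := by
    refine le_antisymm (inf_le_inf_right _ (fieldUnits_mono hAM)) fun x ⟨hx, hxΓ⟩ => ?_
    rw [fieldUnits_inf] at hx
    exact ⟨adjoin_image_val_le_iff.1 le_rfl ⟨hxΓ, hx.2⟩, hxΓ⟩
  have hdeg {B : IntermediateField K L} (hB : B ≤ KΓ) :
      relfinrank B KΓ = (fieldUnits B ⊓ Γ).relIndex Γ := by
    rw [Subgroup.inf_relIndex_right, ← relfinrank_sup_adjoin_eq_relIndex hp hodd hζ hΓ,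
      sup_eq_right.2 hB]
  have hmul := relfinrank_mul_relfinrank hAM (inf_le_left : KΓ ⊓ E ≤ KΓ)
  rw [hdeg inf_le_left, ← hinf, ← hdeg (hAM.trans inf_le_left)] at hmul
  have hne : relfinrank A KΓ ≠ 0 := by
    obtain ⟨m, hm⟩ := exists_relIndex_fieldUnits_eq_prime_pow hp hΓ A
    rw [hdeg (hAM.trans inf_le_left), Subgroup.inf_relIndex_right, hm]
    exact pow_ne_zero m hp.ne_zero
  exact relfinrank_eq_one_iff.1 ((mul_eq_right₀ hne).1 hmul)

theorem rank_adjoin_sup_mul_relIndex (hp : p.Prime) (hodd : Odd p) (hζ : IsPrimitiveRoot ζ p)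
    (hΓ : ∃ m, (fieldUnits (⊥ : IntermediateField K L)).relIndex Γ = p ^ m)
    (E : IntermediateField K L) :
    Module.rank K ↥(adjoin K (Units.val '' (Γ : Set Lˣ)) ⊔ E) *
        (fieldUnits (⊥ : IntermediateField K L)).relIndex (Γ ⊓ fieldUnits E) =
      (fieldUnits (⊥ : IntermediateField K L)).relIndex Γ * Module.rank K E := by
  obtain ⟨m, hm⟩ := exists_relIndex_fieldUnits_eq_prime_pow hp hΓ E
  have hrel : relrank E (E ⊔ adjoin K (Units.val '' (Γ : Set Lˣ))) = (fieldUnits E).relIndex Γ := by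
    rw [← Cardinal.toNat_eq_iff (hm ▸ pow_ne_zero m hp.ne_zero), ← relfinrank_eq_toNat_relrank]
    exact relfinrank_sup_adjoin_eq_relIndex hp hodd hζ hΓ E
  have hindex := Subgroup.relIndex_inf_mul_relIndex
    (fieldUnits (⊥ : IntermediateField K L)) (fieldUnits E) Γ
  rw [inf_eq_left.2 (fieldUnits_mono bot_le), inf_comm] at hindex
  rw [← hindex, sup_comm, ← rank_bot_mul_relrank le_sup_left, hrel, Nat.cast_mul]
  ring

end IntermediateField

section AlgebraicClosure

variable {K : Type*} [Field K]

theorem baseUnits_eq_fieldUnits_bot :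
    baseUnits K = fieldUnits (⊥ : IntermediateField K (AlgebraicClosure K)) := by
  ext x
  rw [mem_fieldUnits, mem_bot]
  constructor
  · rintro ⟨y, rfl⟩
    exact ⟨y, rfl⟩
  · rintro ⟨y, hy⟩
    have hy0 : y ≠ 0 := by
      rintro rfl
      exact x.ne_zero (hy.symm.trans (map_zero _))
    exact ⟨Units.mk0 y hy0, Units.ext hy⟩

theorem unitsIn_eq_fieldUnits (F : IntermediateField K (AlgebraicClosure K)) :
    unitsIn F = fieldUnits F :=
  Subgroup.ext fun _ => mem_fieldUnits.symm

-- `stmt6` coerces each subgroup to a set separately, so its `⊔` is a union of sets and not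
-- the subgroup `Γ`; both generate the same field.
theorem adjoin_image_val_baseUnits_sup (S T : Set (AlgebraicClosure K)ˣ) :
    adjoin K (Units.val '' ((baseUnits K : Set (AlgebraicClosure K)ˣ) ⊔ S ⊔ T)) =
      adjoin K (Units.val '' T) ⊔ adjoin K (Units.val '' S) := by
  have hbase : adjoin K (Units.val '' (baseUnits K : Set (AlgebraicClosure K)ˣ)) = ⊥ :=
    le_bot_iff.1 (adjoin_image_val_le_iff.2 baseUnits_eq_fieldUnits_bot.le)
  simp only [Set.sup_eq_union, Set.image_union]
  rw [adjoin_union, adjoin_union, hbase, bot_sup_eq, sup_comm]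

end AlgebraicClosure

theorem stmt6_general {K L : Type*} [Field K] [Field L] [Algebra K L] {ℓ : ℕ} (hℓ : ℓ.Prime)
    (hodd : Odd ℓ) {ζ : K} (hζ : IsPrimitiveRoot ζ ℓ) (E : IntermediateField K L)
    (Γ : Subgroup Lˣ) (hΓ : ∃ m, (fieldUnits (⊥ : IntermediateField K L)).relIndex Γ = ℓ ^ m) :
    adjoin K (Units.val '' (Γ : Set Lˣ)) ⊓ E =
        adjoin K (Units.val '' ((Γ ⊓ fieldUnits E : Subgroup Lˣ) : Set Lˣ)) ∧
      Module.rank K ↥(adjoin K (Units.val '' (Γ : Set Lˣ)) ⊔ E) *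
          (fieldUnits (⊥ : IntermediateField K L)).relIndex (Γ ⊓ fieldUnits E) =
        (fieldUnits (⊥ : IntermediateField K L)).relIndex Γ * Module.rank K E :=
  ⟨adjoin_inf_eq_adjoin_inf_fieldUnits hℓ hodd hζ hΓ E,
    rank_adjoin_sup_mul_relIndex hℓ hodd hζ hΓ E⟩

/-- Theorem 4.1 (main part): let `ℓ` be an odd prime different from `char K` with `ζ_ℓ ∈ K`,
and `Γ_{ℓ,E} := Γ_ℓ ∩ K(W_ℓ)^×`. Then `K(Γ_ℓ) ∩ K(W_ℓ) = K(Γ_{ℓ,E})` and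
`[K(Γ):K] = |Γ_ℓ : K^×| ⬝ [K(W_ℓ):K] / |Γ_{ℓ,E} : K^×|`. -/
theorem stmt6 (K : Type*) [Field K] (ℓ : ℕ) (hℓ : ℓ.Prime) (hℓodd : Odd ℓ)
    (hchar : ringChar K ≠ ℓ) (hζℓ : ∃ z : K, IsPrimitiveRoot z ℓ)
    (W : Subgroup (AlgebraicClosure K)ˣ)
    (hW : ∃ S : Set (AlgebraicClosure K)ˣ, S.Finite ∧
      (∀ x ∈ S, ∃ q : ℕ, q.Prime ∧ Odd q ∧ q ≠ ℓ ∧ q ≠ ringChar K ∧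
        IsPrimitiveRoot (x : AlgebraicClosure K) q) ∧ W = Subgroup.closure S)
    (Γℓ : Subgroup (AlgebraicClosure K)ˣ) (hΓK : baseUnits K ≤ Γℓ)
    (hidx : ∃ m : ℕ, Subgroup.relIndex (baseUnits K) Γℓ = ℓ ^ m) :
    IntermediateField.adjoin K (Units.val '' (Γℓ : Set (AlgebraicClosure K)ˣ)) ⊓
        IntermediateField.adjoin K (Units.val '' (W : Set (AlgebraicClosure K)ˣ)) =
      IntermediateField.adjoin K (Units.val ''
        ((Γℓ ⊓ unitsIn (IntermediateField.adjoin K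
          (Units.val '' (W : Set (AlgebraicClosure K)ˣ)))) : Set (AlgebraicClosure K)ˣ)) ∧
    Module.finrank K (IntermediateField.adjoin K
        (Units.val '' ((baseUnits K ⊔ W ⊔ Γℓ) : Set (AlgebraicClosure K)ˣ))) *
      Subgroup.relIndex (baseUnits K) (Γℓ ⊓ unitsIn (IntermediateField.adjoin K
        (Units.val '' (W : Set (AlgebraicClosure K)ˣ)))) =
    Subgroup.relIndex (baseUnits K) Γℓ *
      Module.finrank K (IntermediateField.adjoin K
        (Units.val '' (W : Set (AlgebraicClosure K)ˣ))) := by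
  obtain ⟨ζ, hζ⟩ := hζℓ
  rw [baseUnits_eq_fieldUnits_bot] at hidx
  obtain ⟨hinf, hrank⟩ := stmt6_general hℓ hℓodd hζ
    (adjoin K (Units.val '' (W : Set (AlgebraicClosure K)ˣ))) Γℓ hidx
  rw [adjoin_image_val_baseUnits_sup, baseUnits_eq_fieldUnits_bot, unitsIn_eq_fieldUnits]
  refine ⟨hinf, ?_⟩
  simpa only [Module.finrank, map_mul, Cardinal.toNat_natCast] using congrArg Cardinal.toNat hrank

end
end

section
/- Let ℓ be an odd prime different from char(K) with ζ_ℓ ∈ K, and set Γ_{ℓ,E} := Γ_ℓ ∩ K(W_ℓ)^×. Suppose additionally that every root of unity of order a power of ℓ lying in K(W_ℓ) already lies in K. Then K(Γ_{ℓ,E})/K is a Kummer extension: for every α ∈ Γ_{ℓ,E}, if n is the smallest non-negative integer with α^(ℓ^n) ∈ K, then ζ_{ℓ^n} ∈ K. -/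
noncomputable section

open IntermediateField

/-! For `α ∈ E` with `α ^ N ∈ K` and `E / K` Galois, every quotient `σ α / α` is an `N`-th root
of unity of `E`. If `E` contains exactly `d` of these, then `(σ α / α) ^ d = 1` for all `σ`, so
`α ^ d` is fixed by the Galois group and lies in `K`. When `N` is the order of `α` modulo `K^×` this
forces `N ∣ d ≤ N`, so `E` contains a primitive `N`-th root of unity. The field `K(W_ℓ)` is Galois
over `K`, being a compositum of cyclotomic extensions. -/

theorem orderOf_mk_eq_prime_pow {G : Type*} [Group G] {H : Subgroup G} [H.Normal] {g : G}
    {p n : ℕ} (hp : p.Prime) (hg : g ^ p ^ n ∈ H) (hmin : ∀ m < n, g ^ p ^ m ∉ H) :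
    orderOf (g : G ⧸ H) = p ^ n := by
  have pow_eq_one_iff (k : ℕ) : (g : G ⧸ H) ^ k = 1 ↔ g ^ k ∈ H := by
    rw [← QuotientGroup.mk_pow, QuotientGroup.eq_one_iff]
  obtain ⟨m, hmn, hm⟩ :=
    (Nat.dvd_prime_pow hp).1 (orderOf_dvd_of_pow_eq_one ((pow_eq_one_iff _).2 hg))
  have hgm : g ^ p ^ m ∈ H := (pow_eq_one_iff _).1 (hm ▸ pow_orderOf_eq_one _)
  rw [hm, hmn.eq_of_not_lt fun h ↦ hmin m h hgm]

section FieldExtension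

variable {K L : Type*} [Field K] [Field L] [Algebra K L]

theorem isGalois_adjoin_singleton_of_isOfFinOrder {x : L} (hx : IsOfFinOrder x) :
    IsGalois K K⟮x⟯ := by
  have : NeZero (orderOf x) := ⟨hx.orderOf_pos.ne'⟩
  have hprim := IsPrimitiveRoot.orderOf x
  have halg : IsAlgebraic K x := (hprim.isIntegral hx.orderOf_pos).tower_top.isAlgebraic
  have : IsCyclotomicExtension {orderOf x} K K⟮x⟯ := by
    change IsCyclotomicExtension {orderOf x} K K⟮x⟯.toSubalgebra
    rw [adjoin_simple_toSubalgebra_of_isAlgebraic halg]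
    exact hprim.adjoin_isCyclotomicExtension K
  exact IsCyclotomicExtension.isGalois {orderOf x} K K⟮x⟯

theorem isGalois_adjoin_of_isOfFinOrder {S : Set L} (hS : ∀ x ∈ S, IsOfFinOrder x) :
    IsGalois K (adjoin K S) := by
  have (x : S) : IsGalois K K⟮(x : L)⟯ := isGalois_adjoin_singleton_of_isOfFinOrder (hS x x.2)
  rw [← biSup_adjoin_simple, iSup_subtype']
  exact ⟨⟩

theorem isGalois_adjoin_closure_of_isOfFinOrder {S : Set Lˣ} (hS : ∀ x ∈ S, IsOfFinOrder x) :
    IsGalois K (adjoin K (Units.val '' (Subgroup.closure S : Set Lˣ))) :=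
  have closure_le_torsion : Subgroup.closure S ≤ CommGroup.torsion Lˣ :=
    (Subgroup.closure_le _).2 hS
  isGalois_adjoin_of_isOfFinOrder <| Set.forall_mem_image.2 fun _ hx ↦
    Units.isOfFinOrder_val.2 (closure_le_torsion hx)

theorem mem_range_unitsMap_algebraMap_iff {u : Lˣ} :
    u ∈ (Units.map (algebraMap K L).toMonoidHom).range ↔ (u : L) ∈ (algebraMap K L).range := by
  refine ⟨fun ⟨y, hy⟩ ↦ ⟨y, congrArg Units.val hy⟩, fun ⟨y, hy⟩ ↦ ?_⟩
  have hy0 : y ≠ 0 := fun h ↦ u.ne_zero <| by rw [← hy, h, map_zero]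
  exact ⟨Units.mk0 y hy0, Units.ext hy⟩

theorem pow_card_rootsOfUnity_mem_range [IsGalois K L] {n : ℕ} {a : Lˣ}
    (ha : (a : L) ^ n ∈ (algebraMap K L).range) :
    (a : L) ^ Nat.card (rootsOfUnity n L) ∈ (algebraMap K L).range := by
  refine (InfiniteGalois.mem_range_algebraMap_iff_fixed _).2 fun σ ↦ ?_
  let b : Lˣ := Units.map (σ : L →* L) a
  have hb : b / a ∈ rootsOfUnity n L := by
    obtain ⟨y, hy⟩ := ha
    have hba : b ^ n = a ^ n := Units.ext <| by
      simp only [b, Units.val_pow_eq_pow_val, Units.coe_map, MonoidHom.coe_coe, ← map_pow, ← hy,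
        AlgEquiv.commutes]
    rw [mem_rootsOfUnity, div_pow, hba, div_self']
  have hcard : (b / a) ^ Nat.card (rootsOfUnity n L) = 1 :=
    congrArg Subtype.val (pow_card_eq_one' (x := (⟨b / a, hb⟩ : rootsOfUnity n L)))
  rw [div_pow, div_eq_one] at hcard
  simpa [b] using congrArg Units.val hcard

theorem exists_isPrimitiveRoot_orderOf_mk (E : IntermediateField K L) [IsGalois K E] {α : Lˣ}
    (hα : (α : L) ∈ E)
    (hfin : IsOfFinOrder (α : Lˣ ⧸ (Units.map (algebraMap K L).toMonoidHom).range)) :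
    ∃ ζ : E, IsPrimitiveRoot ζ
      (orderOf (α : Lˣ ⧸ (Units.map (algebraMap K L).toMonoidHom).range)) := by
  set N := orderOf (α : Lˣ ⧸ (Units.map (algebraMap K L).toMonoidHom).range) with hN
  have : NeZero N := ⟨hfin.orderOf_pos.ne'⟩
  let a : Eˣ := Units.mk0 ⟨α, hα⟩ (Subtype.coe_ne_coe.1 α.ne_zero)
  have pow_mem_iff (d : ℕ) : (a : E) ^ d ∈ (algebraMap K E).range ↔ N ∣ d := by
    rw [hN, orderOf_dvd_iff_pow_eq_one, ← QuotientGroup.mk_pow, QuotientGroup.eq_one_iff,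
      mem_range_unitsMap_algebraMap_iff]
    exact exists_congr fun y ↦ Subtype.ext_iff
  have hdvd : N ∣ Nat.card (rootsOfUnity N E) :=
    (pow_mem_iff _).1 (pow_card_rootsOfUnity_mem_range ((pow_mem_iff N).2 dvd_rfl))
  exact card_rootsOfUnity_eq_iff_exists_isPrimitiveRoot.1 <|
    (card_rootsOfUnity E N).antisymm (Nat.le_of_dvd Nat.card_pos hdvd)

theorem stmt7_general (E : IntermediateField K L) [IsGalois K E] {N : ℕ} (hN : N ≠ 0)
    (hroots : ∀ x ∈ E, IsPrimitiveRoot x N → x ∈ (algebraMap K L).range) {α : Lˣ}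
    (hα : (α : L) ∈ E)
    (horder : orderOf (α : Lˣ ⧸ (Units.map (algebraMap K L).toMonoidHom).range) = N) :
    ∃ z : K, IsPrimitiveRoot z N := by
  subst horder
  obtain ⟨ζ, hζ⟩ := exists_isPrimitiveRoot_orderOf_mk E hα (orderOf_ne_zero_iff.1 hN)
  have hζL := hζ.map_of_injective (algebraMap E L).injective
  obtain ⟨z, hz⟩ := hroots _ ζ.2 hζL
  exact ⟨z, .of_map_of_injective (hz ▸ hζL) (algebraMap K L).injective⟩

end FieldExtension

/-- Theorem 4.1 (Kummer part): with `ℓ` an odd prime different from `char K`, `ζ_ℓ ∈ K`, and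
assuming every `ℓ`-power order root of unity in `K(W_ℓ)` lies in `K`, the extension
`K(Γ_{ℓ,E})/K` is Kummer: for `α ∈ Γ_{ℓ,E}`, if `n` is minimal with `α^(ℓ^n) ∈ K^×`,
then `ζ_{ℓ^n} ∈ K`. -/
theorem stmt7 (K : Type*) [Field K] (ℓ : ℕ) (hℓ : ℓ.Prime) (hℓodd : Odd ℓ)
    (hchar : ringChar K ≠ ℓ) (hζℓ : ∃ z : K, IsPrimitiveRoot z ℓ)
    (W : Subgroup (AlgebraicClosure K)ˣ)
    (hW : ∃ S : Set (AlgebraicClosure K)ˣ, S.Finite ∧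
      (∀ x ∈ S, ∃ q : ℕ, q.Prime ∧ Odd q ∧ q ≠ ℓ ∧ q ≠ ringChar K ∧
        IsPrimitiveRoot (x : AlgebraicClosure K) q) ∧ W = Subgroup.closure S)
    (Γℓ : Subgroup (AlgebraicClosure K)ˣ) (hΓK : baseUnits K ≤ Γℓ)
    (hidx : ∃ m : ℕ, Subgroup.relIndex (baseUnits K) Γℓ = ℓ ^ m)
    (hroots : ∀ (x : AlgebraicClosure K) (k : ℕ), IsPrimitiveRoot x (ℓ ^ k) →
      x ∈ IntermediateField.adjoin K (Units.val '' (W : Set (AlgebraicClosure K)ˣ)) →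
      ∃ y : K, algebraMap K (AlgebraicClosure K) y = x) :
    ∀ α ∈ Γℓ ⊓ unitsIn (IntermediateField.adjoin K
        (Units.val '' (W : Set (AlgebraicClosure K)ˣ))),
      ∀ n : ℕ, α ^ (ℓ ^ n) ∈ baseUnits K → (∀ m < n, α ^ (ℓ ^ m) ∉ baseUnits K) →
        ∃ z : K, IsPrimitiveRoot z (ℓ ^ n) := by
  obtain ⟨S, -, hS, rfl⟩ := hW
  have := isGalois_adjoin_closure_of_isOfFinOrder (K := K) fun x hx ↦
    have ⟨_, hq, _, _, _, hxq⟩ := hS x hx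
    (IsPrimitiveRoot.coe_units_iff.1 hxq).isOfFinOrder hq.ne_zero
  exact fun α hα n hn hmin ↦ stmt7_general _ (pow_ne_zero n hℓ.ne_zero)
    (fun x hx hxn ↦ hroots x n hxn hx) hα.2 (orderOf_mk_eq_prime_pow hℓ hn hmin)

end
end

section
/- Let ℓ be an odd prime different from char(K) and suppose ζ_ℓ ∉ K. If ζ_ℓ ∉ Γ, then [K(Γ):K] = |Γ_ℓ : K^×| · [K(W_ℓ):K]. -/
noncomputable section

open IntermediateField

/-!
Write `p` for `ℓ` and let `M` be a finite extension of `K` containing `ζ_p`. Adjoining to `M` a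
`p`-th root `z ∈ Γ \ M` of an element of `M` has degree `p`, and by Kummer theory (`p` being odd)
it enlarges `Γ ∩ M^×` exactly by the powers of `z`; inductively, `[M(Γ) : M] = |Γ : Γ ∩ M^×|`.

If moreover `M` is abelian over `K`, then `Γ ∩ M^× = K^×`. Otherwise `Γ ∩ M^×` contains some
`z ∉ K^×` with `z^p = a ∈ K^×`. If `X^p - a` were irreducible, `K(z) ⊆ M` would be a Galois
extension of degree `p`, hence contain `ζ_p`, whose degree over `K` divides `p` and is less than
`p`, forcing `ζ_p ∈ K`. So `a = b^p` with `b ∈ K`, and `z / b ∈ Γ` is a primitive `p`-th root of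
unity, which contradicts `ζ_p ∉ Γ`.

Coset representatives of `Γ / K^×` span `K(Γ)`, so `[K(Γ) : K] ≤ |Γ : K^×| = [M(Γ) : M]`. Therefore
`K(Γ)` and `M` are linearly disjoint over `K`; take `M = L(ζ_p)` with `L = K(W)`, which is abelian
because it is generated by roots of unity.
-/

section Groups

variable {G : Type*} [Group G] {U Γ : Subgroup G} {p n : ℕ} {z : G}

lemma exists_notMem_pow_mem_of_not_le (hpow : ∀ x ∈ Γ, x ^ p ^ n ∈ U) (hΓU : ¬Γ ≤ U) :
    ∃ z ∈ Γ, z ∉ U ∧ z ^ p ∈ U := by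
  induction n with
  | zero => exact absurd (fun x hx => by simpa using hpow x hx) hΓU
  | succ n ih =>
    by_cases h : ∀ x ∈ Γ, x ^ p ^ n ∈ U
    · exact ih h
    · push Not at h
      obtain ⟨x, hxΓ, hxU⟩ := h
      exact ⟨x ^ p ^ n, pow_mem hxΓ _, hxU, by rw [← pow_mul, ← pow_succ]; exact hpow x hxΓ⟩

variable [U.Normal]

lemma relIndex_zpowers_eq_of_prime (hp : p.Prime) (hz : z ∉ U) (hzp : z ^ p ∈ U) :
    U.relIndex (Subgroup.zpowers z) = p := by
  have := Fact.mk hp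
  have hcard := Subgroup.relIndex_ker (Subgroup.zpowers z) (QuotientGroup.mk' U)
  rw [QuotientGroup.ker_mk', MonoidHom.map_zpowers, Nat.card_zpowers] at hcard
  rw [hcard]
  refine orderOf_eq_prime ?_ fun h => hz ((QuotientGroup.eq_one_iff _).1 h)
  rw [← map_pow]
  exact (QuotientGroup.eq_one_iff _).2 hzp

lemma relIndex_eq_prime_of_le_zpowers_sup (hp : p.Prime) (hz : z ∉ U) (hzp : z ^ p ∈ U)
    (hzΓ : z ∈ Γ) (hΓ : Γ ≤ Subgroup.zpowers z ⊔ U) : U.relIndex Γ = p := by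
  have hsup : Γ ⊔ U = Subgroup.zpowers z ⊔ U :=
    le_antisymm (sup_le hΓ le_sup_right) (sup_le_sup_right (by simpa using hzΓ) U)
  rw [← Subgroup.relIndex_sup_right, hsup, Subgroup.relIndex_sup_right,
    relIndex_zpowers_eq_of_prime hp hz hzp]

end Groups

/-- The multiplicative group `Fˣ` as a subgroup of `Eˣ`, for a field extension `E / F`; it makes
sense of `baseUnits` over an intermediate field of the extension and inside any `E`. -/
def unitsRange (F E : Type*) [Field F] [Field E] [Algebra F E] : Subgroup Eˣ :=
  (Units.map (algebraMap F E).toMonoidHom).range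

/-- The field `K(Γ)` generated over `K` by a subgroup `Γ` of `Eˣ`, the object whose degree over `K`
is computed. -/
abbrev adjoinUnits (K : Type*) {E : Type*} [Field K] [Field E] [Algebra K E] (Γ : Subgroup Eˣ) :
    IntermediateField K E :=
  adjoin K (Units.val '' (Γ : Set Eˣ))

section Units

variable {F E : Type*} [Field F] [Field E] [Algebra F E]

lemma mem_unitsRange_iff {u : Eˣ} : u ∈ unitsRange F E ↔ (u : E) ∈ (algebraMap F E).range := by
  refine ⟨?_, fun ⟨a, ha⟩ => ?_⟩
  · rintro ⟨v, rfl⟩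
    exact ⟨v, rfl⟩
  · have ha0 : a ≠ 0 := by
      rintro rfl
      exact u.ne_zero (by rw [← ha, map_zero])
    exact ⟨Units.mk0 a ha0, Units.ext ha⟩

variable {L L' : IntermediateField F E} {Γ : Subgroup Eˣ} {u : Eˣ}

lemma mem_unitsRange_intermediateField : u ∈ unitsRange L E ↔ (u : E) ∈ L := by
  rw [mem_unitsRange_iff]
  exact ⟨fun ⟨y, hy⟩ => hy ▸ y.2, fun h => ⟨⟨_, h⟩, rfl⟩⟩

lemma mem_adjoinUnits (hu : u ∈ Γ) : (u : E) ∈ adjoinUnits F Γ :=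
  subset_adjoin _ _ ⟨u, hu, rfl⟩

lemma adjoinUnits_le_iff : adjoinUnits F Γ ≤ L ↔ Γ ≤ unitsRange L E := by
  rw [adjoin_le_iff, Set.image_subset_iff]
  exact forall₂_congr fun _ _ => mem_unitsRange_intermediateField.symm

lemma unitsRange_mono (h : L ≤ L') : unitsRange L E ≤ unitsRange L' E := fun _ hu =>
  mem_unitsRange_intermediateField.2 (h (mem_unitsRange_intermediateField.1 hu))

lemma unitsRange_le_unitsRange_intermediateField : unitsRange F E ≤ unitsRange L E := fun u hu => by
  obtain ⟨a, ha⟩ := mem_unitsRange_iff.1 hu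
  exact mem_unitsRange_intermediateField.2 (ha ▸ L.algebraMap_mem a)

end Units

section Kummer

open Polynomial

variable {F E : Type*} [Field F] [Field E] [Algebra F E] {n p : ℕ} {ζ a b : F} {ω x y z : E}

lemma exists_pow_mul_eq_of_pow_eq_pow [NeZero n] (hω : IsPrimitiveRoot ω n)
    (hxy : x ^ n = y ^ n) : ∃ i, ω ^ i * y = x := by
  rcases eq_or_ne y 0 with rfl | hy
  · rw [zero_pow (NeZero.ne n)] at hxy
    exact ⟨0, by rw [eq_zero_of_pow_eq_zero hxy, mul_zero]⟩
  · have hroot : (x / y) ^ n = 1 := by rw [div_pow, hxy, div_self (pow_ne_zero _ hy)]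
    obtain ⟨i, -, hi⟩ := hω.eq_pow_of_pow_eq_one hroot
    exact ⟨i, by rw [hi, div_mul_cancel₀ _ hy]⟩

lemma mem_range_algebraMap_of_pow_eq [NeZero n] (hζ : IsPrimitiveRoot ζ n)
    (hx : x ^ n = algebraMap F E b ^ n) : x ∈ (algebraMap F E).range := by
  obtain ⟨i, hi⟩ := exists_pow_mul_eq_of_pow_eq_pow
    (hζ.map_of_injective (algebraMap F E).injective) hx
  exact ⟨ζ ^ i * b, by rw [map_mul, map_pow, hi]⟩

lemma irreducible_X_pow_sub_C_of_notMem_range (hp : p.Prime) (hζ : IsPrimitiveRoot ζ p)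
    (hx : x ^ p = algebraMap F E a) (hxF : x ∉ (algebraMap F E).range) :
    Irreducible (X ^ p - C a) := by
  have := NeZero.mk hp.ne_zero
  refine X_pow_sub_C_irreducible_of_prime hp fun b hb => hxF ?_
  exact mem_range_algebraMap_of_pow_eq hζ (b := b) (by rw [hx, ← hb, map_pow])

lemma irreducible_X_pow_prime_pow_sub_C_of_notMem_range (hp : p.Prime) (hp2 : p ≠ 2)
    (hζ : IsPrimitiveRoot ζ p) (hx : x ^ p ^ (n + 1) = algebraMap F E a)
    (hxF : x ^ p ^ n ∉ (algebraMap F E).range) : Irreducible (X ^ p ^ (n + 1) - C a) := by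
  have := NeZero.mk hp.ne_zero
  refine X_pow_sub_C_irreducible_of_prime_pow hp hp2 _ fun b hb => hxF ?_
  exact mem_range_algebraMap_of_pow_eq hζ (b := b)
    (by rw [← pow_mul, ← pow_succ, hx, ← hb, map_pow])

lemma isIntegral_of_pow_eq (hn : n ≠ 0) (hx : x ^ n = algebraMap F E a) : IsIntegral F x :=
  ⟨X ^ n - C a, monic_X_pow_sub_C a hn, by simp [hx]⟩

lemma minpoly_eq_X_pow_sub_C (ha : Irreducible (X ^ n - C a)) (hx : x ^ n = algebraMap F E a) :
    minpoly F x = X ^ n - C a :=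
  (minpoly.eq_of_irreducible_of_monic ha (by simp [hx])
    (monic_X_pow_sub_C a (ne_zero_of_irreducible_X_pow_sub_C ha))).symm

lemma finrank_adjoin_simple_of_irreducible_X_pow_sub_C (ha : Irreducible (X ^ n - C a))
    (hx : x ^ n = algebraMap F E a) : Module.finrank F F⟮x⟯ = n := by
  rw [adjoin.finrank (isIntegral_of_pow_eq (ne_zero_of_irreducible_X_pow_sub_C ha) hx),
    minpoly_eq_X_pow_sub_C ha hx, natDegree_X_pow_sub_C]

lemma exists_algHom_gen_eq_mul (ha : Irreducible (X ^ n - C a)) (hx : x ^ n = algebraMap F E a)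
    (hω : ω ^ n = 1) : ∃ σ : F⟮x⟯ →ₐ[F] E, σ (AdjoinSimple.gen F x) = ω * x := by
  have hn := ne_zero_of_irreducible_X_pow_sub_C ha
  have hroot : ω * x ∈ (minpoly F x).aroots E := by
    rw [minpoly_eq_X_pow_sub_C ha hx, mem_aroots]
    exact ⟨(monic_X_pow_sub_C a hn).ne_zero, by simp [mul_pow, hω, hx]⟩
  exact ⟨_, algHomAdjoinIntegralEquiv_symm_apply_gen F (isIntegral_of_pow_eq hn hx) ⟨_, hroot⟩⟩

lemma mem_range_algebraMap_of_algHom_apply_eq {A : Type*} [Field A] [Algebra F A]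
    (hA : (Module.finrank F A).Prime) {σ τ : A →ₐ[F] E} (hστ : σ ≠ τ) {w : A} (hw : σ w = τ w) :
    w ∈ (algebraMap F A).range := by
  have := Subalgebra.isSimpleOrder_of_finrank_prime F A hA
  have hbot : AlgHom.equalizer σ τ = ⊥ :=
    (eq_bot_or_eq_top _).resolve_right fun htop => hστ <| AlgHom.ext fun v =>
      (htop ▸ Algebra.mem_top : v ∈ AlgHom.equalizer σ τ)
  exact Algebra.mem_bot.1 (hbot ▸ hw : w ∈ (⊥ : Subalgebra F A))

lemma finrank_adjoin_simple_of_prime_pow_mem_range (hp : p.Prime) (hζ : IsPrimitiveRoot ζ p)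
    (hx : x ∉ (algebraMap F E).range) (hxp : x ^ p ∈ (algebraMap F E).range) :
    Module.finrank F F⟮x⟯ = p := by
  obtain ⟨a, ha⟩ := hxp
  exact finrank_adjoin_simple_of_irreducible_X_pow_sub_C
    (irreducible_X_pow_sub_C_of_notMem_range hp hζ ha.symm hx) ha.symm

lemma exists_eq_mul_pow_of_mem_adjoin_simple (hp : p.Prime) (hζ : IsPrimitiveRoot ζ p)
    (hz : z ∉ (algebraMap F E).range) (hzp : z ^ p ∈ (algebraMap F E).range)
    (hy : y ∈ F⟮z⟯) (hyp : y ^ p ∈ (algebraMap F E).range) :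
    ∃ (c : F) (i : ℕ), y = algebraMap F E c * z ^ i := by
  have := NeZero.mk hp.ne_zero
  have hdeg := finrank_adjoin_simple_of_prime_pow_mem_range hp hζ hz hzp
  obtain ⟨a, ha⟩ := hzp
  obtain ⟨b, hb⟩ := hyp
  have hz0 : z ≠ 0 := by
    rintro rfl
    exact hz (zero_mem _)
  have hirr := irreducible_X_pow_sub_C_of_notMem_range hp hζ ha.symm hz
  have hζE : IsPrimitiveRoot (algebraMap F E ζ) p := hζ.map_of_injective (algebraMap F E).injective
  obtain ⟨σ, hσz⟩ := exists_algHom_gen_eq_mul hirr ha.symm hζE.pow_eq_one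
  have hσ : σ ≠ F⟮z⟯.val := fun h => hζE.ne_one hp.one_lt <|
    mul_right_cancel₀ hz0 (by rw [← hσz, h, one_mul]; rfl)
  have hσy : σ ⟨y, hy⟩ ^ p = y ^ p := by
    rw [← map_pow, show (⟨y, hy⟩ : F⟮z⟯) ^ p = algebraMap F F⟮z⟯ b from Subtype.ext hb.symm,
      AlgHom.commutes, hb]
  -- `σ` multiplies `z` by `ζ` and `y` by `ζ ^ i`, so it fixes `y / z ^ i`.
  obtain ⟨i, hi⟩ := exists_pow_mul_eq_of_pow_eq_pow hζE hσy
  have hfixed : σ (⟨y, hy⟩ / AdjoinSimple.gen F z ^ i) =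
      F⟮z⟯.val (⟨y, hy⟩ / AdjoinSimple.gen F z ^ i) := by
    rw [map_div₀, map_pow, hσz, ← hi, mul_pow,
      mul_div_mul_left _ _ (pow_ne_zero _ (hζE.ne_zero hp.ne_zero))]
    rfl
  obtain ⟨c, hc⟩ := mem_range_algebraMap_of_algHom_apply_eq (hdeg.symm ▸ hp) hσ hfixed
  refine ⟨c, i, (div_eq_iff (pow_ne_zero i hz0)).1 ?_⟩
  exact (congrArg F⟮z⟯.val hc).symm

lemma pow_mem_range_algebraMap_of_finrank_le (hp : p.Prime) (hp2 : p ≠ 2)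
    (hζ : IsPrimitiveRoot ζ p) (hy : Module.finrank F F⟮y⟯ ≤ p)
    (hyp : y ^ p ^ n ∈ (algebraMap F E).range) : y ^ p ∈ (algebraMap F E).range := by
  induction n with
  | zero => exact pow_mem (by simpa using hyp) p
  | succ n ih =>
    by_cases hyn : y ^ p ^ n ∈ (algebraMap F E).range
    · exact ih hyn
    obtain ⟨a, ha⟩ := hyp
    have hirr := irreducible_X_pow_prime_pow_sub_C_of_notMem_range hp hp2 hζ ha.symm hyn
    rw [finrank_adjoin_simple_of_irreducible_X_pow_sub_C hirr ha.symm] at hy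
    have hn : n + 1 ≤ 1 := (Nat.pow_le_pow_iff_right hp.one_lt).1 (by simpa using hy)
    obtain rfl : n = 0 := by omega
    exact ⟨a, by simpa using ha⟩

lemma unitsRange_inf_le_zpowers_sup_unitsRange {z : Eˣ} {Γ : Subgroup Eˣ} (hp : p.Prime)
    (hp2 : p ≠ 2) (hζ : IsPrimitiveRoot ζ p) (hz : z ∉ unitsRange F E)
    (hzp : z ^ p ∈ unitsRange F E) (hΓ : ∀ u ∈ Γ, u ^ p ^ n ∈ unitsRange F E) :
    unitsRange F⟮(z : E)⟯ E ⊓ Γ ≤ Subgroup.zpowers z ⊔ unitsRange F E := by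
  rintro y ⟨hyz, hyΓ⟩
  have hyp := hΓ y hyΓ
  have hyz : (y : E) ∈ F⟮(z : E)⟯ := mem_unitsRange_intermediateField.1 hyz
  rw [mem_unitsRange_iff] at hz hzp hyp
  rw [Units.val_pow_eq_pow_val] at hzp hyp
  have hdeg := finrank_adjoin_simple_of_prime_pow_mem_range hp hζ hz hzp
  have : FiniteDimensional F F⟮(z : E)⟯ := .of_finrank_pos (hdeg ▸ hp.pos)
  have hyle : F⟮(y : E)⟯ ≤ F⟮(z : E)⟯ := adjoin_simple_le_iff.2 hyz
  have hyp' := pow_mem_range_algebraMap_of_finrank_le hp hp2 hζ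
    ((finrank_le_of_le_right hyle).trans_eq hdeg) hyp
  obtain ⟨c, i, hci⟩ := exists_eq_mul_pow_of_mem_adjoin_simple hp hζ hz hzp hyz hyp'
  have hc : y * (z ^ i)⁻¹ ∈ unitsRange F E := mem_unitsRange_iff.2 ⟨c, by
    rw [Units.val_mul, hci, ← Units.val_pow_eq_pow_val, Units.mul_inv_cancel_right]⟩
  rw [sup_comm, ← inv_mul_cancel_right y (z ^ i)]
  exact Subgroup.mul_mem_sup hc (Subgroup.npow_mem_zpowers z i)

lemma relIndex_unitsRange_inf_eq_prime {z : Eˣ} {Γ : Subgroup Eˣ} (hp : p.Prime) (hp2 : p ≠ 2)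
    (hζ : IsPrimitiveRoot ζ p) (hz : z ∉ unitsRange F E) (hzp : z ^ p ∈ unitsRange F E)
    (hzΓ : z ∈ Γ) (hΓ : ∀ u ∈ Γ, u ^ p ^ n ∈ unitsRange F E) :
    (unitsRange F E).relIndex (unitsRange F⟮(z : E)⟯ E ⊓ Γ) = p :=
  relIndex_eq_prime_of_le_zpowers_sup hp hz hzp
    ⟨mem_unitsRange_intermediateField.2 (mem_adjoin_simple_self F _), hzΓ⟩
    (unitsRange_inf_le_zpowers_sup_unitsRange hp hp2 hζ hz hzp hΓ)

end Kummer

section Degree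

variable {K E : Type*} [Field K] [Field E] [Algebra K E] {p m : ℕ} {Γ : Subgroup Eˣ}

lemma relfinrank_sup_adjoinUnits_eq_pow (hp : p.Prime) (hp2 : p ≠ 2) {ζ : E}
    (hζ : IsPrimitiveRoot ζ p) {F : IntermediateField K E} (hζF : ζ ∈ F)
    (hΓ : (unitsRange F E).relIndex Γ = p ^ m) :
    F.relfinrank (F ⊔ adjoinUnits K Γ) = p ^ m := by
  induction m generalizing F with
  | zero =>
    have hle : adjoinUnits K Γ ≤ F := adjoinUnits_le_iff.2 (Subgroup.relIndex_eq_one.1 hΓ)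
    rw [sup_eq_left.2 hle, relfinrank_self, pow_zero]
  | succ m ih =>
    have hζ' : IsPrimitiveRoot (⟨ζ, hζF⟩ : F) p :=
      .of_map_of_injective (f := algebraMap F E) hζ (algebraMap F E).injective
    have hpow : ∀ u ∈ Γ, u ^ p ^ (m + 1) ∈ unitsRange F E := fun u hu =>
      hΓ ▸ Subgroup.pow_relIndex_mem _ hu
    have hnle : ¬Γ ≤ unitsRange F E := fun h =>
      (Nat.one_lt_pow m.succ_ne_zero hp.one_lt).ne ((Subgroup.relIndex_eq_one.2 h).symm.trans hΓ)
    obtain ⟨z, hzΓ, hzF, hzp⟩ := exists_notMem_pow_mem_of_not_le hpow hnle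
    let F' : IntermediateField K E := F⟮(z : E)⟯.restrictScalars K
    have hF' : F' = F ⊔ K⟮(z : E)⟯ := restrictScalars_adjoin_eq_sup K F _
    have hFF' : F ≤ F' := hF' ▸ le_sup_left
    have hsup : F' ⊔ adjoinUnits K Γ = F ⊔ adjoinUnits K Γ := by
      rw [hF', sup_assoc, sup_eq_right.2 (adjoin_simple_le_iff.2 (mem_adjoinUnits hzΓ))]
    have hdeg : F.relfinrank F' = p :=
      (relfinrank_eq_finrank_of_le hFF').trans <|
        finrank_adjoin_simple_of_prime_pow_mem_range hp hζ' (mem_unitsRange_iff.not.1 hzF)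
          (mem_unitsRange_iff.1 hzp)
    have hindex : (unitsRange F' E).relIndex Γ = p ^ m := by
      have hstep : (unitsRange F E).relIndex (unitsRange F' E ⊓ Γ) = p :=
        relIndex_unitsRange_inf_eq_prime hp hp2 hζ' hzF hzp hzΓ hpow
      have hmul := Subgroup.relIndex_inf_mul_relIndex (unitsRange F E) (unitsRange F' E) Γ
      rw [inf_eq_left.2 (unitsRange_mono hFF'), hΓ, pow_succ', hstep] at hmul
      exact Nat.eq_of_mul_eq_mul_left hp.pos hmul
    calc F.relfinrank (F ⊔ adjoinUnits K Γ)
        = F.relfinrank F' * F'.relfinrank (F' ⊔ adjoinUnits K Γ) := by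
          rw [hsup, relfinrank_mul_relfinrank hFF' (hsup ▸ le_sup_left)]
      _ = p * p ^ m := by rw [hdeg, ih (hFF' hζF) hindex]
      _ = p ^ (m + 1) := (pow_succ' p m).symm

end Degree

section UpperBound

variable {K E : Type*} [Field K] [Field E] [Algebra K E] {Γ : Subgroup Eˣ}

lemma isIntegral_of_pow_mem_unitsRange {n : ℕ} (hn : n ≠ 0) {u : Eˣ}
    (hu : u ^ n ∈ unitsRange K E) : IsIntegral K (u : E) := by
  obtain ⟨a, ha⟩ := mem_unitsRange_iff.1 hu
  exact isIntegral_of_pow_eq hn (a := a) (by rw [ha, Units.val_pow_eq_pow_val])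

lemma toSubmodule_adjoinUnits_eq_span (hΓ : ∀ u ∈ Γ, IsIntegral K (u : E)) :
    (adjoinUnits K Γ).toSubalgebra.toSubmodule = Submodule.span K (Units.val '' (Γ : Set Eˣ)) := by
  have hclosure : Submonoid.closure (Units.val '' (Γ : Set Eˣ)) =
      Γ.toSubmonoid.map (Units.coeHom E) :=
    Submonoid.closure_eq (Γ.toSubmonoid.map (Units.coeHom E))
  rw [adjoin_toSubalgebra_of_isAlgebraic, Algebra.adjoin_eq_span, hclosure]
  · rfl
  · rintro _ ⟨u, hu, rfl⟩
    exact (hΓ u hu).isAlgebraic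

lemma span_units_le_span_range_out :
    Submodule.span K (Units.val '' (Γ : Set Eˣ)) ≤ Submodule.span K
      (Set.range fun q : Γ ⧸ (unitsRange K E).subgroupOf Γ => ((q.out : Eˣ) : E)) := by
  rw [Submodule.span_le]
  rintro _ ⟨u, hu, rfl⟩
  let q : Γ ⧸ (unitsRange K E).subgroupOf Γ := QuotientGroup.mk ⟨u, hu⟩
  have hq : (q.out)⁻¹ * ⟨u, hu⟩ ∈ (unitsRange K E).subgroupOf Γ :=
    QuotientGroup.eq.1 q.out_eq
  obtain ⟨c, hc⟩ := mem_unitsRange_iff.1 (Subgroup.mem_subgroupOf.1 hq)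
  have hu : (u : E) = c • ((q.out : Eˣ) : E) := by
    rw [Algebra.smul_def, hc, ← Units.val_mul]
    simp [mul_comm]
  rw [hu]
  exact Submodule.smul_mem _ _ (Submodule.subset_span ⟨q, rfl⟩)

lemma adjoinUnits_eq_span_range_out (h0 : (unitsRange K E).relIndex Γ ≠ 0) :
    (adjoinUnits K Γ).toSubalgebra.toSubmodule = Submodule.span K
      (Set.range fun q : Γ ⧸ (unitsRange K E).subgroupOf Γ => ((q.out : Eˣ) : E)) := by
  have hintegral : ∀ u ∈ Γ, IsIntegral K (u : E) := fun u hu =>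
    isIntegral_of_pow_mem_unitsRange h0 (Subgroup.pow_relIndex_mem _ hu)
  rw [toSubmodule_adjoinUnits_eq_span hintegral]
  refine le_antisymm span_units_le_span_range_out (Submodule.span_mono ?_)
  rintro _ ⟨q, rfl⟩
  exact ⟨_, q.out.2, rfl⟩

lemma finiteDimensional_adjoinUnits (h0 : (unitsRange K E).relIndex Γ ≠ 0) :
    FiniteDimensional K (adjoinUnits K Γ) := by
  have : Finite (Γ ⧸ (unitsRange K E).subgroupOf Γ) := Nat.finite_of_card_ne_zero h0
  have hspan := FiniteDimensional.span_of_finite K (Set.finite_range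
    fun q : Γ ⧸ (unitsRange K E).subgroupOf Γ => ((q.out : Eˣ) : E))
  rwa [← adjoinUnits_eq_span_range_out h0] at hspan

lemma finrank_adjoinUnits_le_relIndex (h0 : (unitsRange K E).relIndex Γ ≠ 0) :
    Module.finrank K (adjoinUnits K Γ) ≤ (unitsRange K E).relIndex Γ := by
  have : Finite (Γ ⧸ (unitsRange K E).subgroupOf Γ) := Nat.finite_of_card_ne_zero h0
  have := Fintype.ofFinite (Γ ⧸ (unitsRange K E).subgroupOf Γ)
  calc Module.finrank K (adjoinUnits K Γ)
      = Set.finrank K (Set.range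
          fun q : Γ ⧸ (unitsRange K E).subgroupOf Γ => ((q.out : Eˣ) : E)) := by
        rw [Set.finrank, ← adjoinUnits_eq_span_range_out h0]
        rfl
    _ ≤ Fintype.card (Γ ⧸ (unitsRange K E).subgroupOf Γ) := finrank_range_le_card _
    _ = (unitsRange K E).relIndex Γ := Fintype.card_eq_nat_card

end UpperBound

section Abelian

variable {K E : Type*} [Field K] [Field E] [Algebra K E]

open scoped IsMulCommutative in
lemma algEquiv_algEquiv_algebraMap_comm {L : Type*} [Field L] [Algebra K L] [Algebra L E]
    [IsScalarTower K L E] [IsAbelianGalois K L] (σ τ : Gal(E/K)) (x : L) :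
    σ (τ (algebraMap L E x)) = τ (σ (algebraMap L E x)) := by
  simp only [← AlgEquiv.restrictNormal_commutes]
  rw [← AlgEquiv.mul_apply, ← AlgEquiv.mul_apply, mul_comm]

lemma isAbelianGalois_sup (L L' : IntermediateField K E) [IsAbelianGalois K L]
    [IsAbelianGalois K L'] : IsAbelianGalois K ↥(L ⊔ L') where
  is_comm.comm σ τ := by
    have hcomm (N : IntermediateField K E) [IsAbelianGalois K N] (hN : N ≤ L ⊔ L') {x : E}
        (hx : x ∈ N) : σ (τ ⟨x, hN hx⟩) = τ (σ ⟨x, hN hx⟩) :=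
      letI := (inclusion hN).toAlgebra
      algEquiv_algEquiv_algebraMap_comm σ τ (⟨x, hx⟩ : N)
    refine AlgEquiv.coe_toAlgHom_injective (algHom_ext_of_eq_adjoin _ (sup_def L L') ?_)
    rintro x (hx | hx)
    · exact hcomm L le_sup_left hx
    · exact hcomm L' le_sup_right hx

lemma isAbelianGalois_adjoin_of_isOfFinOrder {S : Set E} (hS : ∀ x ∈ S, IsOfFinOrder x) :
    IsAbelianGalois K (adjoin K S) := by
  let T : Set ℕ := orderOf '' S
  let C : IntermediateField K E := adjoin K {y | ∃ n ∈ T, n ≠ 0 ∧ y ^ n = 1}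
  have : IsCyclotomicExtension T K C := by
    refine isCyclotomicExtension_adjoin_of_exists_isPrimitiveRoot T K E ?_
    rintro _ ⟨x, -, rfl⟩ -
    exact ⟨x, .orderOf x⟩
  have : IsAbelianGalois K C := IsCyclotomicExtension.isAbelianGalois T K C
  have hSC : adjoin K S ≤ C := adjoin.mono _ _ _ fun x hx =>
    ⟨orderOf x, ⟨x, hx, rfl⟩, (hS x hx).orderOf_pos.ne', pow_orderOf_eq_one x⟩
  exact IsAbelianGalois.of_algHom (inclusion hSC)

lemma finiteDimensional_adjoin_of_isOfFinOrder {S : Set E} (hfin : S.Finite)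
    (hS : ∀ x ∈ S, IsOfFinOrder x) : FiniteDimensional K (adjoin K S) := by
  have := hfin.to_subtype
  exact finiteDimensional_adjoin fun x hx =>
    isIntegral_of_pow_eq (hS x hx).orderOf_pos.ne' (a := 1) (by rw [pow_orderOf_eq_one, map_one])

lemma finrank_adjoin_simple_lt_of_isPrimitiveRoot {n : ℕ} (hn : 1 < n) {ζ : E}
    (hζ : IsPrimitiveRoot ζ n) : Module.finrank K K⟮ζ⟯ < n := by
  have hroot : Polynomial.aeval ζ (Polynomial.cyclotomic n K) = 0 := by
    rw [Polynomial.aeval_def, Polynomial.eval₂_eq_eval_map, Polynomial.map_cyclotomic]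
    exact hζ.isRoot_cyclotomic (by omega)
  calc Module.finrank K K⟮ζ⟯ = (minpoly K ζ).natDegree :=
        adjoin.finrank (hζ.isIntegral (by omega)).tower_top
    _ ≤ (Polynomial.cyclotomic n K).natDegree :=
        Polynomial.natDegree_le_of_dvd (minpoly.dvd K ζ hroot) (Polynomial.cyclotomic_ne_zero n K)
    _ = n.totient := Polynomial.natDegree_cyclotomic n K
    _ < n := Nat.totient_lt n hn

lemma mem_adjoin_simple_of_normal {n : ℕ} {a : K} {x ζ : E} [Normal K K⟮x⟯]
    (ha : Irreducible (Polynomial.X ^ n - Polynomial.C a)) (hx : x ^ n = algebraMap K E a)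
    (hx0 : x ≠ 0) (hζ : ζ ^ n = 1) : ζ ∈ K⟮x⟯ := by
  obtain ⟨σ, hσ⟩ := exists_algHom_gen_eq_mul ha hx hζ
  have hζx : ζ * x ∈ K⟮x⟯ := by
    have hmem : ζ * x ∈ σ.fieldRange := ⟨_, hσ⟩
    rwa [AlgHom.fieldRange_of_normal] at hmem
  simpa [hx0] using div_mem hζx (mem_adjoin_simple_self K x)

lemma exists_pow_eq_of_mem_isAbelianGalois {p : ℕ} (hp : p.Prime) {ζ : E}
    (hζ : IsPrimitiveRoot ζ p) (hζK : ζ ∉ (algebraMap K E).range) (L : IntermediateField K E)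
    [IsAbelianGalois K L] {x : E} (hxL : x ∈ L) {a : K} (hx : x ^ p = algebraMap K E a) :
    ∃ b : K, b ^ p = a := by
  by_contra! hb
  have hirr := X_pow_sub_C_irreducible_of_prime hp hb
  have hx0 : x ≠ 0 := by
    rintro rfl
    refine hb 0 ((algebraMap K E).injective ?_)
    rw [← hx, map_pow, map_zero]
  have hxL' : K⟮x⟯ ≤ L := adjoin_simple_le_iff.2 hxL
  have : IsAbelianGalois K K⟮x⟯ := .of_algHom (inclusion hxL')
  have hζx : K⟮ζ⟯ ≤ K⟮x⟯ :=
    adjoin_simple_le_iff.2 (mem_adjoin_simple_of_normal hirr hx hx0 hζ.pow_eq_one)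
  have hdeg : Module.finrank K K⟮x⟯ = p := finrank_adjoin_simple_of_irreducible_X_pow_sub_C hirr hx
  have hdvd : Module.finrank K K⟮ζ⟯ ∣ p := hdeg ▸ finrank_dvd_of_le_right hζx
  have hone : Module.finrank K K⟮ζ⟯ = 1 := ((Nat.dvd_prime hp).1 hdvd).resolve_right
    (finrank_adjoin_simple_lt_of_isPrimitiveRoot hp.one_lt hζ).ne
  rw [IntermediateField.finrank_eq_one_iff, adjoin_simple_eq_bot_iff] at hone
  exact hζK (mem_bot.1 hone)

end Abelian

section LinearDisjoint

variable {K E : Type*} [Field K] [Field E] [Algebra K E] {p m : ℕ} {ζ : Eˣ} {Γ : Subgroup Eˣ}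

lemma mem_of_pow_eq_pow_of_ne (hp : p.Prime) (hζ : IsPrimitiveRoot ζ p) {u v : Eˣ} (hu : u ∈ Γ)
    (hv : v ∈ Γ) (huv : u ^ p = v ^ p) (hne : u ≠ v) : ζ ∈ Γ := by
  have := Fact.mk hp
  have horder : orderOf (u / v) = p :=
    orderOf_eq_prime (by rw [div_pow, huv, div_self']) (div_ne_one.2 hne)
  have hprim : IsPrimitiveRoot (u / v) p := horder ▸ IsPrimitiveRoot.orderOf (u / v)
  have hζuv : ζ ∈ Subgroup.zpowers (u / v) := by
    rw [hprim.zpowers_eq, ← hζ.zpowers_eq]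
    exact Subgroup.mem_zpowers ζ
  exact Subgroup.zpowers_le.2 (div_mem hu hv) hζuv

lemma unitsRange_inf_le_of_isAbelianGalois (hp : p.Prime) (hζ : IsPrimitiveRoot ζ p) (hζΓ : ζ ∉ Γ)
    (hΓK : unitsRange K E ≤ Γ) (hΓ : ∀ u ∈ Γ, u ^ p ^ m ∈ unitsRange K E)
    (L : IntermediateField K E) [IsAbelianGalois K L] : unitsRange L E ⊓ Γ ≤ unitsRange K E := by
  by_contra hnle
  obtain ⟨z, ⟨hzL, hzΓ⟩, hzK, hzp⟩ :=
    exists_notMem_pow_mem_of_not_le (Γ := unitsRange L E ⊓ Γ) (fun u hu => hΓ u hu.2) hnle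
  obtain ⟨a, ha⟩ := mem_unitsRange_iff.1 hzp
  have hζK : (ζ : E) ∉ (algebraMap K E).range := fun h => hζΓ (hΓK (mem_unitsRange_iff.2 h))
  obtain ⟨b, rfl⟩ := exists_pow_eq_of_mem_isAbelianGalois hp (IsPrimitiveRoot.coe_units_iff.2 hζ)
    hζK L (mem_unitsRange_intermediateField.1 hzL) (by rw [ha, Units.val_pow_eq_pow_val])
  have hb : IsUnit (algebraMap K E b) :=
    (isUnit_pow_iff hp.ne_zero).1 (by rw [← map_pow, ha]; exact Units.isUnit _)
  have hbK : hb.unit ∈ unitsRange K E := mem_unitsRange_iff.2 ⟨b, rfl⟩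
  have hpow : z ^ p = hb.unit ^ p := Units.ext (by simp [← ha])
  exact hζΓ (mem_of_pow_eq_pow_of_ne hp hζ hzΓ (hΓK hbK) hpow fun h => hzK (h ▸ hbK))

lemma finrank_sup_adjoinUnits_eq_mul (hp : p.Prime) (hp2 : p ≠ 2) (hζ : IsPrimitiveRoot ζ p)
    {M : IntermediateField K E} (hζM : (ζ : E) ∈ M) (hΓ : (unitsRange M E).relIndex Γ = p ^ m) :
    Module.finrank K ↥(M ⊔ adjoinUnits K Γ) = Module.finrank K M * p ^ m := by
  rw [← finrank_bot_mul_relfinrank (le_sup_left (b := adjoinUnits K Γ)),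
    relfinrank_sup_adjoinUnits_eq_pow hp hp2 (IsPrimitiveRoot.coe_units_iff.2 hζ) hζM hΓ]

lemma finrank_adjoinUnits_eq_and_linearDisjoint (hp : p.Prime) (hp2 : p ≠ 2)
    (hζ : IsPrimitiveRoot ζ p) (hΓK : unitsRange K E ≤ Γ)
    (hidx : (unitsRange K E).relIndex Γ = p ^ m) (M : IntermediateField K E)
    [FiniteDimensional K M] (hζM : (ζ : E) ∈ M) (hMΓ : unitsRange M E ⊓ Γ ≤ unitsRange K E) :
    Module.finrank K (adjoinUnits K Γ) = p ^ m ∧ M.LinearDisjoint (adjoinUnits K Γ) := by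
  have h0 : (unitsRange K E).relIndex Γ ≠ 0 := hidx ▸ pow_ne_zero m hp.ne_zero
  have := finiteDimensional_adjoinUnits h0
  have hM : unitsRange M E ⊓ Γ = unitsRange K E :=
    le_antisymm hMΓ (le_inf unitsRange_le_unitsRange_intermediateField hΓK)
  have hidxM : (unitsRange M E).relIndex Γ = p ^ m := by
    rw [← Subgroup.inf_relIndex_right, hM, hidx]
  have hsup := finrank_sup_adjoinUnits_eq_mul hp hp2 hζ hζM hidxM
  have hdeg : Module.finrank K (adjoinUnits K Γ) = p ^ m := by
    refine le_antisymm (hidx ▸ finrank_adjoinUnits_le_relIndex h0) ?_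
    have hle := finrank_sup_le M (adjoinUnits K Γ)
    rw [hsup] at hle
    exact Nat.le_of_mul_le_mul_left hle Module.finrank_pos
  exact ⟨hdeg, .of_finrank_sup (by rw [hsup, hdeg])⟩

lemma finrank_sup_adjoinUnits_of_isAbelianGalois (hp : p.Prime) (hζ : IsPrimitiveRoot ζ p)
    (hζΓ : ζ ∉ Γ) (hΓK : unitsRange K E ≤ Γ) (hidx : (unitsRange K E).relIndex Γ = p ^ m)
    (L : IntermediateField K E) [FiniteDimensional K L] [IsAbelianGalois K L] :
    Module.finrank K ↥(L ⊔ adjoinUnits K Γ) = p ^ m * Module.finrank K L := by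
  have hζfin : ∀ x ∈ ({(ζ : E)} : Set E), IsOfFinOrder x := by
    rintro _ rfl
    exact (IsPrimitiveRoot.coe_units_iff.2 hζ).isOfFinOrder hp.ne_zero
  have hp2 : p ≠ 2 := by
    rintro rfl
    refine hζΓ (hΓK (mem_unitsRange_iff.2 ⟨-1, ?_⟩))
    rw [(IsPrimitiveRoot.coe_units_iff.2 hζ).eq_neg_one_of_two_right, map_neg, map_one]
  have := isAbelianGalois_adjoin_of_isOfFinOrder (K := K) hζfin
  have := finiteDimensional_adjoin_of_isOfFinOrder (K := K) (Set.finite_singleton _) hζfin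
  have := isAbelianGalois_sup L K⟮(ζ : E)⟯
  have hpow : ∀ u ∈ Γ, u ^ p ^ m ∈ unitsRange K E := fun u hu =>
    hidx ▸ Subgroup.pow_relIndex_mem _ hu
  obtain ⟨hdeg, hdisj⟩ := finrank_adjoinUnits_eq_and_linearDisjoint hp hp2 hζ hΓK hidx
    (L ⊔ K⟮(ζ : E)⟯) (le_sup_right (a := L) (mem_adjoin_simple_self K (ζ : E)))
    (unitsRange_inf_le_of_isAbelianGalois hp hζ hζΓ hΓK hpow _)
  rw [(hdisj.of_le_left le_sup_left).finrank_sup, hdeg, mul_comm]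

end LinearDisjoint

section Generation

variable {K E : Type*} [Field K] [Field E] [Algebra K E]

lemma adjoinUnits_closure (S : Set Eˣ) :
    adjoinUnits K (Subgroup.closure S) = adjoin K (Units.val '' S) := by
  refine le_antisymm (adjoinUnits_le_iff.2 ((Subgroup.closure_le _).2 fun u hu => ?_))
    (adjoin.mono _ _ _ (Set.image_mono Subgroup.subset_closure))
  exact mem_unitsRange_intermediateField.2 (subset_adjoin _ _ ⟨u, hu, rfl⟩)

lemma isAbelianGalois_adjoinUnits_closure {S : Set Eˣ} (hS : ∀ u ∈ S, IsOfFinOrder u) :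
    IsAbelianGalois K (adjoinUnits K (Subgroup.closure S)) := by
  rw [adjoinUnits_closure]
  exact isAbelianGalois_adjoin_of_isOfFinOrder
    (Set.forall_mem_image.2 fun u hu => Units.isOfFinOrder_val.2 (hS u hu))

lemma finiteDimensional_adjoinUnits_closure {S : Set Eˣ} (hfin : S.Finite)
    (hS : ∀ u ∈ S, IsOfFinOrder u) :
    FiniteDimensional K (adjoinUnits K (Subgroup.closure S)) := by
  rw [adjoinUnits_closure]
  exact finiteDimensional_adjoin_of_isOfFinOrder (hfin.image _)
    (Set.forall_mem_image.2 fun u hu => Units.isOfFinOrder_val.2 (hS u hu))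

lemma adjoin_unitsRange_sup_sup (W Γ : Subgroup Eˣ) :
    adjoin K (Units.val '' ((unitsRange K E : Set Eˣ) ⊔ W ⊔ Γ)) =
      adjoinUnits K W ⊔ adjoinUnits K Γ := by
  have hbase : adjoin K (Units.val '' (unitsRange K E : Set Eˣ)) = ⊥ :=
    le_bot_iff.1 (adjoinUnits_le_iff.2 unitsRange_le_unitsRange_intermediateField)
  simp only [Set.sup_eq_union, Set.image_union, adjoin_union]
  rw [hbase, bot_sup_eq]

lemma exists_units_isPrimitiveRoot [IsSepClosed E] (n : ℕ) [NeZero (n : E)] :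
    ∃ ζ : Eˣ, IsPrimitiveRoot ζ n := by
  obtain ⟨ζ, hζ⟩ := HasEnoughRootsOfUnity.exists_primitiveRoot E n
  exact ⟨(hζ.isUnit (NeZero.of_neZero_natCast E).out).unit, IsPrimitiveRoot.coe_units_iff.1 hζ⟩

lemma neZero_natCast_of_ringChar_ne (E : Type*) [Field E] [Algebra K E] {p : ℕ} (hp : p.Prime)
    (hchar : ringChar K ≠ p) : NeZero (p : E) := by
  have : NeZero (p : K) :=
    ⟨fun h => ((Nat.dvd_prime hp).1 (ringChar.dvd h)).elim CharP.ringChar_ne_one hchar⟩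
  exact NeZero.nat_of_injective (algebraMap K E).injective

end Generation

theorem stmt9_general {K E : Type*} [Field K] [Field E] [Algebra K E] {p : ℕ} (hp : p.Prime)
    {ζ : Eˣ} (hζ : IsPrimitiveRoot ζ p) (W : Subgroup Eˣ) [FiniteDimensional K (adjoinUnits K W)]
    [IsAbelianGalois K (adjoinUnits K W)] {Γ : Subgroup Eˣ} (hΓK : unitsRange K E ≤ Γ)
    (hidx : ∃ m, (unitsRange K E).relIndex Γ = p ^ m) (hζΓ : ζ ∉ Γ) :
    Module.finrank K (adjoin K (Units.val '' ((unitsRange K E : Set Eˣ) ⊔ W ⊔ Γ))) =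
      (unitsRange K E).relIndex Γ * Module.finrank K (adjoinUnits K W) := by
  obtain ⟨m, hm⟩ := hidx
  rw [adjoin_unitsRange_sup_sup, hm,
    finrank_sup_adjoinUnits_of_isAbelianGalois hp hζ hζΓ hΓK hm (adjoinUnits K W)]

/-- Theorem 4.3 (first part): let `ℓ` be an odd prime different from `char K` with `ζ_ℓ ∉ K`.
If `ζ_ℓ ∉ Γ`, then `[K(Γ):K] = |Γ_ℓ : K^×| ⬝ [K(W_ℓ):K]`. -/
theorem stmt9 (K : Type*) [Field K] (ℓ : ℕ) (hℓ : ℓ.Prime) (hℓodd : Odd ℓ)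
    (hchar : ringChar K ≠ ℓ) (hnK : ¬ ∃ z : K, IsPrimitiveRoot z ℓ)
    (W : Subgroup (AlgebraicClosure K)ˣ)
    (hW : ∃ S : Set (AlgebraicClosure K)ˣ, S.Finite ∧
      (∀ x ∈ S, ∃ q : ℕ, q.Prime ∧ Odd q ∧ q ≠ ℓ ∧ q ≠ ringChar K ∧
        IsPrimitiveRoot (x : AlgebraicClosure K) q) ∧ W = Subgroup.closure S)
    (Γℓ : Subgroup (AlgebraicClosure K)ˣ) (hΓK : baseUnits K ≤ Γℓ)
    (hidx : ∃ m : ℕ, Subgroup.relIndex (baseUnits K) Γℓ = ℓ ^ m)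
    (hnΓ : ∀ x : (AlgebraicClosure K)ˣ, IsPrimitiveRoot (x : AlgebraicClosure K) ℓ →
      x ∉ baseUnits K ⊔ W ⊔ Γℓ) :
    Module.finrank K (IntermediateField.adjoin K
        (Units.val '' ((baseUnits K ⊔ W ⊔ Γℓ) : Set (AlgebraicClosure K)ˣ))) =
      Subgroup.relIndex (baseUnits K) Γℓ *
        Module.finrank K (IntermediateField.adjoin K
          (Units.val '' (W : Set (AlgebraicClosure K)ˣ))) := by
  obtain ⟨S, hSfin, hS, rfl⟩ := hW
  have hSord : ∀ u ∈ S, IsOfFinOrder u := fun u hu => by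
    obtain ⟨q, hq, -, -, -, hprim⟩ := hS u hu
    exact (IsPrimitiveRoot.coe_units_iff.1 hprim).isOfFinOrder hq.ne_zero
  have := isAbelianGalois_adjoinUnits_closure (K := K) hSord
  have := finiteDimensional_adjoinUnits_closure (K := K) hSfin hSord
  have := neZero_natCast_of_ringChar_ne (K := K) (AlgebraicClosure K) hℓ hchar
  obtain ⟨ζ, hζ⟩ := exists_units_isPrimitiveRoot (E := AlgebraicClosure K) ℓ
  exact stmt9_general hℓ hζ (Subgroup.closure S) hΓK hidx fun h =>
    hnΓ ζ (IsPrimitiveRoot.coe_units_iff.2 hζ) (Subgroup.mem_sup_right h)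

end
end
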